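/- arXiv:2508.19211 — 2 statements merged into one kernel-verified Lean document; each statement's English description precedes it below -/
import Mathlib

section
/- Let ℓ be an odd prime different from char(K) and suppose ζ_ℓ ∉ K and ζ_ℓ ∈ Γ. Let ε ≥ 1 be the largest integer such that ζ_{ℓ^ε} ∈ Γ ∩ K(ζ_ℓ). Then [K(Γ_ℓ) : K(ζ_ℓ)] = |Γ_ℓ : K^×| · ℓ^{-ε} and the index of K^× in Γ_ℓ ∩ K(ζ_ℓ)^× equals ℓ^ε. -/
noncomputable section

open IntermediateField

/-- `K^×` viewed as a subgroup of the units of the algebraic closure of `K`. -/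
def baseUnits (K : Type*) [Field K] : Subgroup (AlgebraicClosure K)ˣ :=
  (Units.map (algebraMap K (AlgebraicClosure K)).toMonoidHom).range

/-- The subgroup of `(AlgebraicClosure K)ˣ` of elements whose `m`-th power lies in `K^×`. -/
def radGroup (K : Type*) [Field K] (m : ℕ) : Subgroup (AlgebraicClosure K)ˣ where
  carrier := {x | ∃ y : K, algebraMap K (AlgebraicClosure K) y = (x : AlgebraicClosure K) ^ m}
  one_mem' := ⟨1, by simp⟩
  mul_mem' := by
    rintro a b ⟨y, hy⟩ ⟨z, hz⟩
    exact ⟨y * z, by rw [map_mul, hy, hz, Units.val_mul, mul_pow]⟩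
  inv_mem' := by
    rintro a ⟨y, hy⟩
    refine ⟨y⁻¹, ?_⟩
    rw [map_inv₀, hy, Units.val_inv_eq_inv_val, inv_pow]

lemma radGroup_le (K : Type*) [Field K] {m k : ℕ} :
    radGroup K m ≤ radGroup K (m * k) := by
  rintro x ⟨y, hy⟩
  exact ⟨y ^ k, by rw [map_pow, hy, ← pow_mul]⟩

/-- The group `√[ℓ^∞]{K^×}` of radicals of `ℓ`-power order over `K`. -/
def radInf (K : Type*) [Field K] (ℓ : ℕ) : Subgroup (AlgebraicClosure K)ˣ where
  carrier := {x | ∃ n : ℕ, x ∈ radGroup K (ℓ ^ n)}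
  one_mem' := ⟨0, one_mem _⟩
  mul_mem' := by
    rintro a b ⟨n, ha⟩ ⟨m, hb⟩
    refine ⟨n + m, mul_mem ?_ ?_⟩
    · have h : radGroup K (ℓ ^ n) ≤ radGroup K (ℓ ^ (n + m)) := by
        rw [pow_add]; exact radGroup_le K
      exact h ha
    · have h : radGroup K (ℓ ^ m) ≤ radGroup K (ℓ ^ (n + m)) := by
        rw [add_comm, pow_add]; exact radGroup_le K
      exact h hb
  inv_mem' := by
    rintro a ⟨n, ha⟩
    exact ⟨n, inv_mem ha⟩

/-- The units of the algebraic closure lying in an intermediate field `F`, as a subgroup. -/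
def unitsIn {K : Type*} [Field K] (F : IntermediateField K (AlgebraicClosure K)) :
    Subgroup (AlgebraicClosure K)ˣ where
  carrier := {x | (x : AlgebraicClosure K) ∈ F}
  one_mem' := by
    show ((1 : (AlgebraicClosure K)ˣ) : AlgebraicClosure K) ∈ F
    simpa using one_mem F
  mul_mem' := by
    intro a b ha hb
    show ((a * b : (AlgebraicClosure K)ˣ) : AlgebraicClosure K) ∈ F
    rw [Units.val_mul]
    exact mul_mem ha hb
  inv_mem' := by
    intro x hx
    show ((x⁻¹ : (AlgebraicClosure K)ˣ) : AlgebraicClosure K) ∈ F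
    rw [Units.val_inv_eq_inv_val]
    exact inv_mem hx

/-- `K(ζ_{2𝒫})`: the extension of `K` generated by all roots of unity whose order is `4` or
an odd prime, and not divisible by the characteristic of `K`. -/
def cyclo2P (K : Type*) [Field K] : IntermediateField K (AlgebraicClosure K) :=
  IntermediateField.adjoin K
    {x : AlgebraicClosure K |
      ∃ n : ℕ, (n = 4 ∨ (n.Prime ∧ Odd n)) ∧ ¬ (ringChar K ∣ n) ∧ IsPrimitiveRoot x n}

/-- The set of roots of unity of order exactly `n` in the algebraic closure of `K`. -/
def primRoots (K : Type*) [Field K] (n : ℕ) : Set (AlgebraicClosure K) :=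
  {x | IsPrimitiveRoot x n}

/-- The set of roots of unity of order `ℓ^n` for `n ≤ t` (all of them if `t = ∞`). -/
def pPowRoots (K : Type*) [Field K] (ℓ : ℕ) (t : ℕ∞) : Set (AlgebraicClosure K) :=
  {x | ∃ n : ℕ, (n : ℕ∞) ≤ t ∧ IsPrimitiveRoot x (ℓ ^ n)}

/-- The set of units that are roots of unity of order `ℓ^n` for `n ≤ t`. -/
def pPowRootsUnits (K : Type*) [Field K] (ℓ : ℕ) (t : ℕ∞) : Set (AlgebraicClosure K)ˣ :=
  {x | ∃ n : ℕ, (n : ℕ∞) ≤ t ∧ IsPrimitiveRoot (x : AlgebraicClosure K) (ℓ ^ n)}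

lemma kn_deg {F L : Type*} [Field F] [Field L] [Algebra F L] {ℓ : ℕ} (hℓ : ℓ.Prime)
    (hodd : Odd ℓ) {ζ : F} (hζ : IsPrimitiveRoot ζ ℓ) {x : L} {n : ℕ} {a : F}
    (hx : x ^ (ℓ ^ (n + 1)) = algebraMap F L a)
    (hn : ∀ b : F, algebraMap F L b ≠ x ^ (ℓ ^ n)) :
    Irreducible (Polynomial.X ^ (ℓ ^ (n + 1)) - Polynomial.C a : Polynomial F) ∧
    minpoly F x = Polynomial.X ^ (ℓ ^ (n + 1)) - Polynomial.C a := by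
  have hpos : 0 < ℓ ^ (n + 1) := pow_pos hℓ.pos _
  have h2 : ℓ ≠ 2 := by
    rintro rfl
    exact absurd hodd (by decide)
  have hirr : Irreducible (Polynomial.X ^ (ℓ ^ (n + 1)) - Polynomial.C a : Polynomial F) := by
    apply X_pow_sub_C_irreducible_of_prime_pow hℓ h2
    intro b hb
    have hζ' : IsPrimitiveRoot (algebraMap F L ζ) ℓ :=
      hζ.map_of_injective (algebraMap F L).injective
    have h1 : (x ^ ℓ ^ n) ^ ℓ = (algebraMap F L b) ^ ℓ := by
      rw [← pow_mul, ← pow_succ, hx, ← hb, map_pow]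
    by_cases hb0 : b = 0
    · subst hb0
      apply hn 0
      rw [map_zero, zero_pow hℓ.ne_zero] at h1
      rw [map_zero]
      exact (pow_eq_zero_iff hℓ.ne_zero).1 h1 |>.symm
    · have hb1 : algebraMap F L b ≠ 0 := by simpa using hb0
      have h3 : (x ^ ℓ ^ n / algebraMap F L b) ^ ℓ = 1 := by
        rw [div_pow, h1, div_self (pow_ne_zero _ hb1)]
      have : NeZero ℓ := ⟨hℓ.ne_zero⟩
      obtain ⟨i, -, hi⟩ := hζ'.eq_pow_of_pow_eq_one h3
      apply hn (ζ ^ i * b)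
      rw [map_mul, map_pow, hi, div_mul_cancel₀ _ hb1]
  refine ⟨hirr, (minpoly.eq_of_irreducible_of_monic hirr ?_ ?_).symm⟩
  · simp [hx]
  · exact Polynomial.monic_X_pow_sub_C _ hpos.ne'

lemma kn_kummer {F L : Type*} [Field F] [Field L] [Algebra F L] {ℓ : ℕ} (hℓ : ℓ.Prime)
    (hodd : Odd ℓ) {ζ : F} (hζ : IsPrimitiveRoot ζ ℓ) {h : L} {a : F}
    (ha : h ^ ℓ = algebraMap F L a) (hh : ∀ b : F, algebraMap F L b ≠ h)
    (htop : F⟮h⟯ = ⊤) :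
    Module.finrank F L = ℓ ∧ ∀ x : L, x ≠ 0 → (∃ n : ℕ, ∃ b : F, x ^ (ℓ ^ n) = algebraMap F L b) →
      ∃ (i : ℕ) (c : F), x * h ^ i = algebraMap F L c := by
  have hint : IsIntegral F h := by
    refine IsIntegral.of_pow hℓ.pos ?_
    rw [ha]
    exact isIntegral_algebraMap
  obtain ⟨hirr, hmin⟩ := kn_deg (x := h) (n := 0) (a := a) hℓ hodd hζ (by simpa using ha)
    (by simpa using hh)
  have hfr : Module.finrank F L = ℓ := by
    rw [← IntermediateField.finrank_top', ← htop, IntermediateField.adjoin.finrank hint, hmin]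
    simp
  refine ⟨hfr, ?_⟩
  have : FiniteDimensional F L := Module.finite_of_finrank_pos (by rw [hfr]; exact hℓ.pos)
  have hne : (primitiveRoots ℓ F).Nonempty := ⟨ζ, (mem_primitiveRoots hℓ.pos).2 hζ⟩
  have hirr' : Irreducible (Polynomial.X ^ ℓ - Polynomial.C a : Polynomial F) := by
    simpa using hirr
  have hsplit : Polynomial.IsSplittingField F L (Polynomial.X ^ ℓ - Polynomial.C a) := by
    have := isSplittingField_X_pow_sub_C_of_root_adjoin_eq_top (K := F) (L := L)
      (by rw [hfr]; exact hne) (a := a) (α := h) (by rw [hfr]; exact ha) htop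
    rwa [hfr] at this
  have := isGalois_of_isSplittingField_X_pow_sub_C hne hirr' L
  have hcard : Nat.card (L ≃ₐ[F] L) = ℓ := by rw [IsGalois.card_aut_eq_finrank, hfr]
  have : Fact ℓ.Prime := ⟨hℓ⟩
  have : NeZero ℓ := ⟨hℓ.ne_zero⟩
  have hζ' : IsPrimitiveRoot (algebraMap F L ζ) ℓ :=
    hζ.map_of_injective (algebraMap F L).injective
  have hh0 : h ≠ 0 := by
    rintro rfl
    exact hh 0 (map_zero _)
  obtain ⟨σ, hσ⟩ : ∃ σ : L ≃ₐ[F] L, σ h ≠ h := by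
    by_contra! hcon
    have := (IsGalois.mem_bot_iff_fixed (F := F) h).2 hcon
    obtain ⟨b, hb⟩ := IntermediateField.mem_bot.1 this
    exact hh b hb
  have key : ∀ y : L, y ≠ 0 → (∃ b, y ^ ℓ = algebraMap F L b) →
      (σ y / y) ^ ℓ = 1 := by
    rintro y hy ⟨b, hb⟩
    rw [div_pow, ← map_pow, hb, AlgEquiv.commutes, div_self]
    rw [← hb]
    exact pow_ne_zero _ hy
  have hω1 := key h hh0 ⟨a, ha⟩
  have hω : IsPrimitiveRoot (σ h / h) ℓ := by
    rw [← orderOf_eq_prime hω1 (fun h1 => hσ ((div_eq_one_iff_eq hh0).1 h1))]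
    exact IsPrimitiveRoot.orderOf _
  intro x hx0 hxn
  classical
  let n := Nat.find hxn
  obtain ⟨b, hb⟩ := Nat.find_spec hxn
  have hxl : ∃ b, x ^ ℓ = algebraMap F L b := by
    rcases hnn : Nat.find hxn with _ | k
    · rw [hnn] at hb
      exact ⟨b ^ ℓ, by rw [map_pow, ← hb]; simp⟩
    · have hmn := Nat.find_min hxn (m := k) (by omega)
      push Not at hmn
      rw [hnn] at hb
      have hm := (kn_deg hℓ hodd hζ hb (fun c hc => hmn c hc.symm)).2
      have hle := minpoly.natDegree_le (A := F) x
      rw [hm, hfr, Polynomial.natDegree_X_pow_sub_C] at hle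
      have : k = 0 := by
        by_contra hk
        have : ℓ ^ 1 < ℓ ^ (k + 1) := Nat.pow_lt_pow_right hℓ.one_lt (by omega)
        rw [pow_one] at this
        omega
      subst this
      exact ⟨b, by simpa using hb⟩
  obtain ⟨i, hi, hi'⟩ := hω.eq_pow_of_pow_eq_one (key x hx0 hxl)
  refine ⟨ℓ - i, ?_⟩
  have hσh : σ h = (σ h / h) * h := by field_simp
  have hσx : σ x = (σ h / h) ^ i * x := by rw [hi']; field_simp
  have hfix : σ (x * h ^ (ℓ - i)) = x * h ^ (ℓ - i) := by
    rw [map_mul, map_pow, hσx, hσh, mul_pow]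
    have : (σ h / h) ^ i * (σ h / h) ^ (ℓ - i) = 1 := by
      rw [← pow_add, Nat.add_sub_cancel' hi.le, hω1]
    simp only [mul_div_assoc, div_self hh0, mul_one]
    linear_combination (x * h ^ (ℓ - i)) * this
  have hmem : x * h ^ (ℓ - i) ∈ (⊥ : IntermediateField F L) := by
    rw [IsGalois.mem_bot_iff_fixed]
    have hσ1 : σ ≠ 1 := by
      rintro rfl
      exact hσ rfl
    intro τ
    have hτ : τ ∈ Subgroup.zpowers σ := mem_zpowers_of_prime_card hcard hσ1
    have hst : Subgroup.zpowers σ ≤ MulAction.stabilizer (L ≃ₐ[F] L) (x * h ^ (ℓ - i)) := by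
      rw [Subgroup.zpowers_le]
      exact hfix
    exact hst hτ
  obtain ⟨c, hc⟩ := IntermediateField.mem_bot.1 hmem
  exact ⟨c, hc.symm⟩

lemma kn_index {G : Type*} [CommGroup G] {A B : Subgroup G} {h : G} {n : ℕ} (hB : h ∈ B)
    (hn : ∀ i : ℕ, h ^ i ∈ A ↔ n ∣ i) (hgen : ∀ x ∈ B, ∃ i : ℕ, x * h ^ i ∈ A) :
    A.relIndex B = n := by
  rw [Subgroup.relIndex, Subgroup.index]
  let g : B ⧸ A.subgroupOf B := QuotientGroup.mk ⟨h, hB⟩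
  have hg : orderOf g = n := by
    have : ∀ i : ℕ, orderOf g ∣ i ↔ n ∣ i := by
      intro i
      rw [orderOf_dvd_iff_pow_eq_one, ← hn i]
      change (QuotientGroup.mk ((⟨h, hB⟩ : B) ^ i) : B ⧸ A.subgroupOf B) = 1 ↔ _
      rw [QuotientGroup.eq_one_iff, Subgroup.mem_subgroupOf]
      simp
    exact Nat.dvd_antisymm ((this n).2 dvd_rfl) ((this _).1 dvd_rfl)
  rw [← hg, eq_comm]
  apply orderOf_eq_card_of_forall_mem_zpowers
  intro y
  induction y using QuotientGroup.induction_on with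
  | H x =>
    obtain ⟨i, hi⟩ := hgen x x.2
    refine ⟨-(i : ℤ), ?_⟩
    have : (QuotientGroup.mk (x * (⟨h, hB⟩ : B) ^ i) : B ⧸ A.subgroupOf B) = 1 := by
      rw [QuotientGroup.eq_one_iff, Subgroup.mem_subgroupOf]
      simpa using hi
    have h2 : (QuotientGroup.mk x : B ⧸ A.subgroupOf B) * g ^ i = 1 := this
    simp only [zpow_neg, zpow_natCast]
    exact (eq_inv_of_mul_eq_one_left h2).symm

lemma kn_pow_mem {G : Type*} [CommGroup G] {A B : Subgroup G} {x : G} (hx : x ∈ B) :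
    x ^ (A.relIndex B) ∈ A := by
  have := (A.subgroupOf B).pow_index_mem (⟨x, hx⟩ : B)
  exact this

lemma kn_mem_unitsIn {K : Type*} [Field K] {F : IntermediateField K (AlgebraicClosure K)}
    {x : (AlgebraicClosure K)ˣ} : x ∈ unitsIn F ↔ (x : AlgebraicClosure K) ∈ F := Iff.rfl

lemma kn_kneser {K : Type*} [Field K] {ℓ : ℕ} (hℓ : ℓ.Prime) (hodd : Odd ℓ)
    (H : Subgroup (AlgebraicClosure K)ˣ) (m : ℕ) :
    ∀ (F : IntermediateField K (AlgebraicClosure K)) (ζ : F), IsPrimitiveRoot ζ ℓ →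
      (unitsIn F).relIndex H = ℓ ^ m →
      IntermediateField.relfinrank F (F ⊔ IntermediateField.adjoin K
        (Units.val '' (H : Set (AlgebraicClosure K)ˣ))) = ℓ ^ m := by
  induction m with
  | zero =>
    intro F ζ hζ hidx
    rw [pow_zero, Subgroup.relIndex_eq_one] at hidx
    rw [pow_zero, IntermediateField.relfinrank_eq_one_iff, sup_le_iff]
    refine ⟨le_rfl, ?_⟩
    rw [IntermediateField.adjoin_le_iff]
    rintro _ ⟨x, hx, rfl⟩
    exact hidx hx
  | succ m ih =>
    intro F ζ hζ hidx
    have hpw : ∀ x ∈ H, x ^ (ℓ ^ (m + 1)) ∈ unitsIn F := fun x hx => by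
      rw [← hidx]; exact kn_pow_mem hx
    obtain ⟨h, hhH, hhF, hhl⟩ : ∃ h ∈ H, h ∉ unitsIn F ∧ h ^ ℓ ∈ unitsIn F := by
      have hnle : ¬ H ≤ unitsIn F := by
        rw [← Subgroup.relIndex_eq_one, hidx]
        exact (Nat.one_lt_pow (by omega) hℓ.one_lt).ne'
      obtain ⟨x, hxH, hxF⟩ := SetLike.not_le_iff_exists.1 hnle
      classical
      have hex : ∃ n, x ^ (ℓ ^ n) ∈ unitsIn F := ⟨_, hpw x hxH⟩
      rcases hk : Nat.find hex with _ | k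
      · have := Nat.find_spec hex
        rw [hk] at this
        exact absurd (by simpa using this) hxF
      · have h1 := Nat.find_spec hex
        rw [hk] at h1
        refine ⟨x ^ ℓ ^ k, pow_mem hxH _, Nat.find_min hex (by omega), ?_⟩
        rwa [← pow_mul, ← pow_succ]
    let E : IntermediateField F (AlgebraicClosure K) :=
      IntermediateField.adjoin F {(h : AlgebraicClosure K)}
    let F' : IntermediateField K (AlgebraicClosure K) := E.restrictScalars K
    have hFF' : F ≤ F' := fun x hx => E.algebraMap_mem ⟨x, hx⟩
    have hhE : (h : AlgebraicClosure K) ∈ E := IntermediateField.mem_adjoin_simple_self F _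
    have hgen : IntermediateField.adjoin F
        {IntermediateField.AdjoinSimple.gen F (h : AlgebraicClosure K)} = ⊤ := by
      apply IntermediateField.lift_injective
      rw [IntermediateField.lift_adjoin_simple, IntermediateField.lift_top]
      rfl
    obtain ⟨hfr, hkum⟩ := kn_kummer (F := F) (L := E) hℓ hodd hζ
      (h := IntermediateField.AdjoinSimple.gen F (h : AlgebraicClosure K))
      (a := ⟨(h : AlgebraicClosure K) ^ ℓ, by simpa [kn_mem_unitsIn] using hhl⟩)
      (by ext; simp)
      (fun b hb => hhF (by
        have := congrArg (fun z : E => (z : AlgebraicClosure K)) hb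
        rw [kn_mem_unitsIn]
        change (b : AlgebraicClosure K) = h at this
        rw [← this]
        exact b.2)) hgen
    have hrel : IntermediateField.relfinrank F F' = ℓ := by
      rw [IntermediateField.relfinrank_eq_finrank_of_le hFF']
      exact hfr
    have hlow : (unitsIn F).relIndex (unitsIn F' ⊓ H) = ℓ := by
      have hhB : h ∈ unitsIn F' ⊓ H := ⟨hhE, hhH⟩
      apply kn_index (h := h) hhB
      · intro i
        constructor
        · intro hi
          by_contra hnd
          have hcop : Nat.Coprime ℓ i := (hℓ.coprime_iff_not_dvd).2 hnd
          apply hhF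
          have hb := Nat.gcd_eq_gcd_ab ℓ i
          rw [hcop.gcd_eq_one] at hb
          have : h = (h ^ ℓ) ^ (Nat.gcdA ℓ i) * (h ^ i) ^ (Nat.gcdB ℓ i) := by
            rw [← zpow_natCast, ← zpow_natCast, ← zpow_mul, ← zpow_mul, ← zpow_add, ← hb]
            simp
          rw [this]
          exact mul_mem (zpow_mem hhl _) (zpow_mem hi _)
        · rintro ⟨j, rfl⟩
          rw [pow_mul]
          exact pow_mem hhl _
      · rintro x ⟨hxF', hxH⟩
        obtain ⟨i, c, hc⟩ := hkum ⟨x, hxF'⟩ (by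
            intro h0
            exact x.ne_zero (congrArg (fun z : E => (z : AlgebraicClosure K)) h0))
          ⟨m + 1, ⟨(x : AlgebraicClosure K) ^ (ℓ ^ (m + 1)), by
            simpa [kn_mem_unitsIn] using hpw x hxH⟩, by ext; simp⟩
        refine ⟨i, ?_⟩
        have := congrArg (fun z : E => (z : AlgebraicClosure K)) hc
        change (x : AlgebraicClosure K) * (h : AlgebraicClosure K) ^ i = (c : AlgebraicClosure K) at this
        rw [kn_mem_unitsIn]
        push_cast
        rw [this]
        exact c.2
    have hidx' : (unitsIn F').relIndex H = ℓ ^ m := by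
      have hle : unitsIn F ≤ unitsIn F' := fun x hx => hFF' hx
      have h1 := Subgroup.relIndex_inf_mul_relIndex (unitsIn F) (unitsIn F') H
      rw [hlow, inf_eq_left.2 hle, hidx, pow_succ, mul_comm] at h1
      exact Nat.eq_of_mul_eq_mul_right hℓ.pos h1
    have hfin := ih F' (⟨ζ, hFF' ζ.2⟩ : F') (by
      have h1 : IsPrimitiveRoot ((IntermediateField.inclusion hFF') ζ) ℓ :=
        hζ.map_of_injective (IntermediateField.inclusion hFF').injective
      exact h1) hidx'
    have hsup : F ⊔ IntermediateField.adjoin K (Units.val '' (H : Set (AlgebraicClosure K)ˣ))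
        = F' ⊔ IntermediateField.adjoin K (Units.val '' (H : Set (AlgebraicClosure K)ˣ)) := by
      apply le_antisymm (sup_le_sup_right hFF' _)
      refine sup_le ?_ le_sup_right
      have hFs : F ≤ F ⊔ IntermediateField.adjoin K
        (Units.val '' (H : Set (AlgebraicClosure K)ˣ)) := le_sup_left
      have : E ≤ IntermediateField.extendScalars hFs := by
        rw [IntermediateField.adjoin_simple_le_iff]
        rw [IntermediateField.mem_extendScalars]
        exact (le_sup_right : _ ≤ F ⊔ _)
          (IntermediateField.subset_adjoin K _ ⟨h, hhH, rfl⟩)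
      exact fun x hx => this hx
    rw [hsup, ← IntermediateField.relfinrank_mul_relfinrank hFF' le_sup_left, hrel, hfin,
      pow_succ, mul_comm]

lemma kn_W {Ω : Type*} [Field Ω] {ℓ : ℕ} (hℓ : ℓ.Prime) {S : Set Ωˣ}
    (hS : ∀ x ∈ S, ∃ q : ℕ, q.Prime ∧ q ≠ ℓ ∧ IsPrimitiveRoot (x : Ω) q) {w : Ωˣ}
    (hw : w ∈ Subgroup.closure S) : ∃ N : ℕ, Nat.Coprime N ℓ ∧ w ^ N = 1 := by
  induction hw using Subgroup.closure_induction with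
  | mem x hx =>
    obtain ⟨q, hq, hql, hr⟩ := hS x hx
    refine ⟨q, (Nat.coprime_primes hq hℓ).2 hql, ?_⟩
    ext
    simpa using hr.pow_eq_one
  | one => exact ⟨1, by simp, by simp⟩
  | mul x y _ _ hx hy =>
    obtain ⟨N, hN, hx⟩ := hx
    obtain ⟨M, hM, hy⟩ := hy
    refine ⟨N * M, Nat.Coprime.mul_left hN hM, ?_⟩
    rw [mul_pow, pow_mul, hx, mul_comm N M, pow_mul, hy]
    simp
  | inv x _ hx =>
    obtain ⟨N, hN, hx⟩ := hx
    exact ⟨N, hN, by simp [hx]⟩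

lemma kn_zmem {G : Type*} [Group G] (A : Subgroup G) {x : G} {a b : ℕ} (hab : Nat.Coprime a b)
    (ha : x ^ a ∈ A) (hb : x ^ b ∈ A) : x ∈ A := by
  have hg := Nat.gcd_eq_gcd_ab a b
  rw [hab.gcd_eq_one] at hg
  have : x = (x ^ a) ^ (Nat.gcdA a b) * (x ^ b) ^ (Nat.gcdB a b) := by
    rw [← zpow_natCast, ← zpow_natCast, ← zpow_mul, ← zpow_mul, ← zpow_add, ← hg]
    simp
  rw [this]
  exact mul_mem (zpow_mem ha _) (zpow_mem hb _)

lemma kn_prime_root {G : Type*} [Group G] {ℓ : ℕ} (hℓ : ℓ.Prime) {z : G} {n e : ℕ}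
    (hz : z ^ (ℓ ^ n) = 1) (hne : z ^ (ℓ ^ e) ≠ 1) :
    ∃ j : ℕ, orderOf (z ^ j) = ℓ ^ (e + 1) := by
  obtain ⟨k, hk, hord⟩ := (Nat.dvd_prime_pow hℓ).1 (orderOf_dvd_of_pow_eq_one hz)
  have hek : e < k := by
    by_contra! hle
    apply hne
    rw [← orderOf_dvd_iff_pow_eq_one, hord]
    exact pow_dvd_pow _ hle
  refine ⟨ℓ ^ (k - (e + 1)), ?_⟩
  have hpos : 0 < ℓ ^ (k - (e + 1)) := pow_pos hℓ.pos _
  have hsplit : ℓ ^ k = ℓ ^ (e + 1) * ℓ ^ (k - (e + 1)) := by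
    rw [← pow_add]; congr 1; omega
  rw [orderOf_pow' _ hpos.ne', hord, hsplit, Nat.gcd_mul_left_left, Nat.mul_div_cancel _ hpos]

/-- Lemma 5.1 (second part): with `ℓ` an odd prime different from `char K`, `ζ_ℓ ∉ K`,
`ζ_ℓ ∈ Γ`, and `ε ≥ 1` the largest integer such that `ζ_{ℓ^ε} ∈ Γ ∩ K(ζ_ℓ)`, we have
`[K(Γ_ℓ) : K(ζ_ℓ)] = |Γ_ℓ : K^×| ⬝ ℓ^{-ε}` (stated multiplied out) and
`|Γ_ℓ ∩ K(ζ_ℓ)^× : K^×| = ℓ^ε`. -/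
theorem stmt12 (K : Type*) [Field K] (ℓ : ℕ) (hℓ : ℓ.Prime) (hℓodd : Odd ℓ)
    (hchar : ringChar K ≠ ℓ) (hnK : ¬ ∃ z : K, IsPrimitiveRoot z ℓ)
    (W : Subgroup (AlgebraicClosure K)ˣ)
    (hW : ∃ S : Set (AlgebraicClosure K)ˣ, S.Finite ∧
      (∀ x ∈ S, ∃ q : ℕ, q.Prime ∧ Odd q ∧ q ≠ ℓ ∧ q ≠ ringChar K ∧
        IsPrimitiveRoot (x : AlgebraicClosure K) q) ∧ W = Subgroup.closure S)
    (Γℓ : Subgroup (AlgebraicClosure K)ˣ) (hΓK : baseUnits K ≤ Γℓ)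
    (hidx : ∃ m : ℕ, Subgroup.relIndex (baseUnits K) Γℓ = ℓ ^ m)
    (hζΓ : ∃ x ∈ baseUnits K ⊔ W ⊔ Γℓ, IsPrimitiveRoot (x : AlgebraicClosure K) ℓ)
    (ε : ℕ) (hε1 : 1 ≤ ε)
    (hεin : ∃ x : (AlgebraicClosure K)ˣ, IsPrimitiveRoot (x : AlgebraicClosure K) (ℓ ^ ε) ∧
      x ∈ baseUnits K ⊔ W ⊔ Γℓ ∧ (x : AlgebraicClosure K) ∈
        IntermediateField.adjoin K (primRoots K ℓ))
    (hεmax : ∀ x : (AlgebraicClosure K)ˣ,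
      IsPrimitiveRoot (x : AlgebraicClosure K) (ℓ ^ (ε + 1)) →
      ¬ (x ∈ baseUnits K ⊔ W ⊔ Γℓ ∧ (x : AlgebraicClosure K) ∈
        IntermediateField.adjoin K (primRoots K ℓ))) :
    Module.finrank K (IntermediateField.adjoin K
        (Units.val '' (Γℓ : Set (AlgebraicClosure K)ˣ))) * ℓ ^ ε =
      Subgroup.relIndex (baseUnits K) Γℓ *
        Module.finrank K (IntermediateField.adjoin K (primRoots K ℓ)) ∧
    Subgroup.relIndex (baseUnits K)
        (Γℓ ⊓ unitsIn (IntermediateField.adjoin K (primRoots K ℓ))) = ℓ ^ ε := by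
  obtain ⟨S, -, hS, rfl⟩ := hW
  obtain ⟨m, hm⟩ := hidx
  -- roots of unity of `ℓ`-power order in `Γ` lie in `Γℓ`
  have hroot : ∀ (z : (AlgebraicClosure K)ˣ) (n : ℕ),
      z ∈ baseUnits K ⊔ Subgroup.closure S ⊔ Γℓ → z ^ (ℓ ^ n) = 1 → z ∈ Γℓ := by
    intro z n hz hzn
    obtain ⟨y, hy, g, hg, rfl⟩ := Subgroup.mem_sup.1 hz
    obtain ⟨k, hk, w, hw, rfl⟩ := Subgroup.mem_sup.1 hy
    obtain ⟨N, hN, hwN⟩ := kn_W (Ω := AlgebraicClosure K) hℓ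
      (fun x hx => by
        obtain ⟨q, h1, -, h2, -, h3⟩ := hS x hx
        exact ⟨q, h1, h2, h3⟩) hw
    refine kn_zmem Γℓ (a := N) (b := ℓ ^ n) (hN.pow_right n) ?_ ?_
    · rw [mul_pow, mul_pow, hwN, mul_one]
      exact mul_mem (pow_mem (hΓK hk) _) (pow_mem hg _)
    · rw [hzn]; exact one_mem _
  set L := IntermediateField.adjoin K (primRoots K ℓ) with hL
  obtain ⟨ξ, hξΓ, hξ⟩ := hζΓ
  have hξΓℓ : ξ ∈ Γℓ := hroot ξ 1 hξΓ (by ext; simpa using hξ.pow_eq_one)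
  have hξL : (ξ : AlgebraicClosure K) ∈ L := IntermediateField.subset_adjoin K _ hξ
  have hLle : ∀ M : IntermediateField K (AlgebraicClosure K), (ξ : AlgebraicClosure K) ∈ M →
      L ≤ M := by
    intro M hM
    rw [hL, IntermediateField.adjoin_le_iff]
    intro y hy
    have : NeZero ℓ := ⟨hℓ.ne_zero⟩
    obtain ⟨i, -, rfl⟩ := hξ.eq_pow_of_pow_eq_one (IsPrimitiveRoot.pow_eq_one hy)
    exact pow_mem hM i
  have hξint : IsIntegral K (ξ : AlgebraicClosure K) := Algebra.IsIntegral.isIntegral _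
  have hLeq : L = IntermediateField.adjoin K {(ξ : AlgebraicClosure K)} := by
    apply le_antisymm (hLle _ (IntermediateField.mem_adjoin_simple_self K _))
    rw [IntermediateField.adjoin_simple_le_iff]
    exact hξL
  have hfd : FiniteDimensional K L := by
    rw [hLeq]
    exact IntermediateField.adjoin.finiteDimensional hξint
  have hdlt : Module.finrank K L < ℓ := by
    rw [hLeq, IntermediateField.adjoin.finrank hξint]
    have hdvd : minpoly K (ξ : AlgebraicClosure K) ∣ Polynomial.cyclotomic ℓ K := by
      apply minpoly.dvd
      rw [Polynomial.aeval_def, Polynomial.eval₂_eq_eval_map, Polynomial.map_cyclotomic]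
      exact hξ.isRoot_cyclotomic hℓ.pos
    have := Polynomial.natDegree_le_of_dvd hdvd (Polynomial.cyclotomic_ne_zero ℓ K)
    rw [Polynomial.natDegree_cyclotomic, Nat.totient_prime hℓ] at this
    have := hℓ.pos
    omega
  have hdpos : 0 < Module.finrank K L := Module.finrank_pos
  have hdcop : Nat.Coprime (Module.finrank K L) ℓ :=
    ((hℓ.coprime_iff_not_dvd).2 (Nat.not_dvd_of_pos_of_lt hdpos hdlt)).symm
  obtain ⟨h, hh, hhΓ, hhL⟩ := hεin
  have hhpow : h ^ (ℓ ^ ε) = 1 := by ext; simpa using hh.pow_eq_one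
  have hhΓℓ : h ∈ Γℓ := hroot h ε hhΓ hhpow
  -- no nontrivial `ℓ`-power roots of unity in `K`
  have hKroot : ∀ (z : (AlgebraicClosure K)ˣ) (n : ℕ), z ∈ baseUnits K → z ^ (ℓ ^ n) = 1 →
      z = 1 := by
    intro z n hz hzn
    by_contra hz1
    obtain ⟨j, hj⟩ := kn_prime_root hℓ (e := 0) hzn (by simpa using hz1)
    obtain ⟨u, hu⟩ := hz
    apply hnK
    refine ⟨((u ^ j : Kˣ) : K), ?_⟩
    have h1 : IsPrimitiveRoot (((z ^ j : (AlgebraicClosure K)ˣ)) : AlgebraicClosure K) ℓ := by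
      rw [IsPrimitiveRoot.coe_units_iff]
      have := IsPrimitiveRoot.orderOf (z ^ j)
      rwa [hj, zero_add, pow_one] at this
    apply IsPrimitiveRoot.of_map_of_injective (f := algebraMap K (AlgebraicClosure K)) _
      (algebraMap K (AlgebraicClosure K)).injective
    convert h1 using 1
    rw [← hu]
    simp
  have hbaseL : ∀ x ∈ baseUnits K, x ∈ unitsIn L := by
    rintro _ ⟨u, rfl⟩
    exact L.algebraMap_mem u
  have hhB : h ∈ Γℓ ⊓ unitsIn L := ⟨hhΓℓ, hhL⟩
  have hB : (baseUnits K).relIndex (Γℓ ⊓ unitsIn L) = ℓ ^ ε := by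
    apply kn_index hhB
    · intro i
      rw [← hh.pow_eq_one_iff_dvd]
      constructor
      · intro hi
        have := hKroot _ ε hi (by rw [← pow_mul, mul_comm, pow_mul, hhpow, one_pow])
        rw [← Units.val_pow_eq_pow_val, this, Units.val_one]
      · intro hi
        have : h ^ i = 1 := by ext; simpa using hi
        rw [this]; exact one_mem _
    · rintro x ⟨hxΓ, hxL⟩
      -- `x ^ (ℓ ^ m)` is in `K`
      have hxm : x ^ (ℓ ^ m) ∈ baseUnits K := by
        rw [← hm]; exact kn_pow_mem hxΓ
      obtain ⟨a, ha⟩ := hxm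
      let x' : L := ⟨x, hxL⟩
      have hx'0 : x' ≠ 0 := fun h0 => x.ne_zero (congrArg (fun z : L => (z : AlgebraicClosure K)) h0)
      have hx'm : x' ^ (ℓ ^ m) = algebraMap K L a := by
        ext
        have := congrArg Units.val ha
        simpa using this.symm
      let u : Kˣ := Units.mk0 (Algebra.norm K x') (by
        rw [Ne, Algebra.norm_eq_zero_iff]; exact hx'0)
      let U : (AlgebraicClosure K)ˣ :=
        Units.map (algebraMap K (AlgebraicClosure K)).toMonoidHom u
      have hU : U ∈ baseUnits K := ⟨u, rfl⟩
      have hum : u ^ (ℓ ^ m) = a ^ (Module.finrank K L) := by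
        ext
        push_cast
        change (Algebra.norm K x') ^ (ℓ ^ m) = _
        rw [← map_pow, hx'm, Algebra.norm_algebraMap]
      have hUm : U ^ (ℓ ^ m) = x ^ (ℓ ^ m * Module.finrank K L) := by
        rw [pow_mul, ← ha, ← map_pow, ← map_pow, hum]
      set d := Module.finrank K L with hd
      have hz1 : (x ^ d * U⁻¹) ^ (ℓ ^ m) = 1 := by
        rw [mul_pow, inv_pow, hUm, ← pow_mul, mul_comm d, mul_inv_cancel]
      have hzB : x ^ d * U⁻¹ ∈ Γℓ ⊓ unitsIn L :=
        mul_mem (pow_mem (Subgroup.mem_inf.2 ⟨hxΓ, hxL⟩) _)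
          (inv_mem (Subgroup.mem_inf.2 ⟨hΓK hU, hbaseL _ hU⟩))
      have hz2 : (x ^ d * U⁻¹) ^ (ℓ ^ ε) = 1 := by
        by_contra hne
        obtain ⟨j, hj⟩ := kn_prime_root hℓ hz1 hne
        refine hεmax ((x ^ d * U⁻¹) ^ j) ?_ ⟨?_, ?_⟩
        · rw [IsPrimitiveRoot.coe_units_iff, ← hj]
          exact IsPrimitiveRoot.orderOf _
        · exact Subgroup.mem_sup_right (pow_mem hzB.1 j)
        · exact (pow_mem (Subgroup.mem_inf.1 hzB).2 j : _ ∈ unitsIn L)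
      have hxsup : x ∈ baseUnits K ⊔ Subgroup.zpowers h := by
        refine kn_zmem _ (a := d) (b := ℓ ^ m) (hdcop.pow_right m) ?_ ?_
        · have : NeZero (ℓ ^ ε) := ⟨(pow_pos hℓ.pos _).ne'⟩
          have hh' : IsPrimitiveRoot h (ℓ ^ ε) := IsPrimitiveRoot.coe_units_iff.1 hh
          have hzz : x ^ d * U⁻¹ ∈ Subgroup.zpowers h := by
            rw [hh'.zpowers_eq, mem_rootsOfUnity]
            exact hz2
          have : x ^ d = U * (x ^ d * U⁻¹) := by
            rw [mul_comm, inv_mul_cancel_right]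
          rw [this]
          exact Subgroup.mul_mem_sup hU hzz
        · exact Subgroup.mem_sup_left ⟨a, ha⟩
      obtain ⟨y, hy, g, hg, hyg⟩ := Subgroup.mem_sup.1 hxsup
      have hfin : IsOfFinOrder h := isOfFinOrder_iff_pow_eq_one.2 ⟨_, pow_pos hℓ.pos ε, hhpow⟩
      obtain ⟨i, hi⟩ := hfin.mem_powers_iff_mem_zpowers.2 (inv_mem hg)
      refine ⟨i, ?_⟩
      rw [show h ^ i = g⁻¹ from hi, ← hyg, mul_inv_cancel_right]
      exact hy
  refine ⟨?_, hB⟩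
  have hmul := Subgroup.relIndex_mul_relIndex (baseUnits K) (Γℓ ⊓ unitsIn L) Γℓ
    (le_inf hΓK hbaseL) inf_le_left
  rw [Subgroup.inf_relIndex_left, hB] at hmul
  obtain ⟨r, -, hr⟩ := (Nat.dvd_prime_pow hℓ).1
    (show (unitsIn L).relIndex Γℓ ∣ ℓ ^ m from ⟨ℓ ^ ε, by rw [mul_comm, hmul, hm]⟩)
  have hkn := kn_kneser hℓ hℓodd Γℓ r L ⟨ξ, hξL⟩
    (IsPrimitiveRoot.of_map_of_injective (f := L.val) hξ L.val.injective) hr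
  have hLG : L ≤ IntermediateField.adjoin K
      (Units.val '' (Γℓ : Set (AlgebraicClosure K)ˣ)) :=
    hLle _ (IntermediateField.subset_adjoin K _ ⟨ξ, hξΓℓ, rfl⟩)
  rw [sup_eq_right.2 hLG] at hkn
  rw [← IntermediateField.relfinrank_bot_left,
    ← IntermediateField.relfinrank_mul_relfinrank bot_le hLG, hkn,
    IntermediateField.relfinrank_bot_left, ← hmul, hr]
  ring

end
end

section
/- Let char(K) ≠ 2 and consider the special case of Kneser's theorem: ζ_4 ∉ K and (1+ζ_4 ∈ Γ or 1−ζ_4 ∈ Γ). Then [K(Γ_2):K] = 2·|⟨Γ_2, K(ζ_4)^×⟩ : K(ζ_4)^×|. Moreover, setting Γ_{2,E} := ⟨Γ_2, K(ζ_4)^×⟩ ∩ K(W_2, ζ_4)^×, we have K(Γ_2) ∩ K(W_2, ζ_4) = K(Γ_{2,E}) and [K(Γ):K] = [K(Γ_2):K] · [K(W_2, ζ_4):K] / (2 · |Γ_{2,E} : K(ζ_4)^×|). -/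
noncomputable section

open IntermediateField

lemma quad_ext {K : Type*} [Field K] (F : IntermediateField K (AlgebraicClosure K))
    (a : AlgebraicClosure K) (ha : a ∉ F) (ha2 : a ^ 2 ∈ F) :
    ∃ F1 : IntermediateField K (AlgebraicClosure K), F ≤ F1 ∧ a ∈ F1 ∧
      F.relfinrank F1 = 2 ∧ ∀ x ∈ F1, ∃ u ∈ F, ∃ v ∈ F, x = u + v * a := by
  have hint : IsIntegral F a := by
    have h : IsIntegral F (a ^ 2) := isIntegral_algebraMap (x := (⟨a ^ 2, ha2⟩ : F))
    exact h.of_pow (by norm_num)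
  have hle : F ≤ (IntermediateField.adjoin F {a}).restrictScalars K := by
    intro x hx
    exact (IntermediateField.adjoin F {a}).algebraMap_mem ⟨x, hx⟩
  refine ⟨(IntermediateField.adjoin F {a}).restrictScalars K, hle, ?_, ?_, ?_⟩
  · exact IntermediateField.mem_adjoin_simple_self F a
  · rw [IntermediateField.relfinrank_eq_finrank_of_le hle]
    have h1 : IntermediateField.extendScalars hle = IntermediateField.adjoin F {a} := by
      ext x; rfl
    rw [h1, IntermediateField.adjoin.finrank hint]
    apply le_antisymm
    · set p : Polynomial F := Polynomial.X ^ 2 - Polynomial.C (⟨a ^ 2, ha2⟩ : F) with hp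
      have hd : p.natDegree = 2 := Polynomial.natDegree_X_pow_sub_C
      have hp0 : p ≠ 0 := by
        intro h; rw [h] at hd; simp at hd
      rw [← hd]
      apply Polynomial.natDegree_le_of_dvd _ hp0
      apply minpoly.dvd
      simp [hp]
    · rw [minpoly.two_le_natDegree_iff hint]
      rintro ⟨y, rfl⟩
      exact ha y.2
  · intro x hx
    have hx' : x ∈ Algebra.adjoin F {a} := by
      rw [← IntermediateField.adjoin_simple_toSubalgebra_of_isAlgebraic hint.isAlgebraic]
      exact hx
    clear hx
    induction hx' using Algebra.adjoin_induction with
    | mem x hx =>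
      rw [Set.mem_singleton_iff] at hx
      exact ⟨0, zero_mem _, 1, one_mem _, by rw [hx]; ring⟩
    | algebraMap r => exact ⟨r, r.2, 0, zero_mem _, by simp⟩
    | add x y hx hy ihx ihy =>
      obtain ⟨u, hu, v, hv, rfl⟩ := ihx
      obtain ⟨u', hu', v', hv', rfl⟩ := ihy
      exact ⟨u + u', add_mem hu hu', v + v', add_mem hv hv', by ring⟩
    | mul x y hx hy ihx ihy =>
      obtain ⟨u, hu, v, hv, rfl⟩ := ihx
      obtain ⟨u', hu', v', hv', rfl⟩ := ihy
      exact ⟨u * u' + v * v' * a ^ 2, add_mem (mul_mem hu hu') (mul_mem (mul_mem hv hv') ha2),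
        u * v' + v * u', add_mem (mul_mem hu hv') (mul_mem hv hu'), by ring⟩

lemma quad_rad {K : Type*} [Field K] (F : IntermediateField K (AlgebraicClosure K))
    (h2 : (2 : AlgebraicClosure K) ≠ 0)
    (i : AlgebraicClosure K) (hi : i ∈ F) (hi2 : i ^ 2 = -1)
    (a : AlgebraicClosure K) (ha : a ∉ F) (ha2 : a ^ 2 ∈ F)
    (F1 : IntermediateField K (AlgebraicClosure K))
    (hF1 : ∀ x ∈ F1, ∃ u ∈ F, ∃ v ∈ F, x = u + v * a) (n : ℕ) :
    ∀ g ∈ F1, (g ^ 2 ^ n ∈ F ∨ ∃ v ∈ F, g ^ 2 ^ n = v * a) →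
      (g ∈ F ∨ ∃ v ∈ F, g = v * a) := by
  induction n with
  | zero => intro g hg h; simpa using h
  | succ n ih =>
    intro g hg h
    have key : g ^ 2 ∈ F ∨ ∃ v ∈ F, g ^ 2 = v * a := by
      apply ih (g ^ 2) (pow_mem hg 2)
      rw [← pow_mul, ← pow_succ']
      exact h
    have uniq : ∀ u ∈ F, ∀ v ∈ F, u + v * a = 0 → u = 0 ∧ v = 0 := by
      intro u hu v hv h
      by_cases hv0 : v = 0
      · subst hv0; simpa using h
      · exfalso; apply ha
        have : a = - u / v := by
          rw [eq_div_iff hv0]; linear_combination h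
        rw [this]
        exact div_mem (neg_mem hu) hv
    obtain ⟨u, hu, v, hv, rfl⟩ := hF1 g hg
    rcases key with h | ⟨w, hw, h⟩
    · have := (uniq (u ^ 2 + v ^ 2 * a ^ 2 - (u + v * a) ^ 2)
        (sub_mem (add_mem (pow_mem hu 2) (mul_mem (pow_mem hv 2) ha2)) h) (2 * (u * v))
        (mul_mem (by exact ofNat_mem F 2) (mul_mem hu hv)) (by ring)).2
      rcases mul_eq_zero.1 ((mul_eq_zero.1 this).resolve_left h2) with h | h
      · right; exact ⟨v, hv, by rw [h]; ring⟩
      · left; rw [h]; simpa using hu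
    · have := (uniq (u ^ 2 + v ^ 2 * a ^ 2) 
        (add_mem (pow_mem hu 2) (mul_mem (pow_mem hv 2) ha2)) (2 * (u * v) - w)
        (sub_mem (mul_mem (by exact ofNat_mem F 2) (mul_mem hu hv)) hw)
        (by linear_combination h)).1
      have h3 : (u + i * (v * a)) * (u - i * (v * a)) = 0 := by
        linear_combination this - v ^ 2 * a ^ 2 * hi2
      rcases mul_eq_zero.1 h3 with h3 | h3
      · have := (uniq u hu (i * v) (mul_mem hi hv) (by linear_combination h3)).1
        right; exact ⟨v, hv, by rw [this]; ring⟩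
      · have := (uniq u hu (- (i * v)) (neg_mem (mul_mem hi hv)) (by linear_combination h3)).1
        right; exact ⟨v, hv, by rw [this]; ring⟩

lemma mem_unitsIn {K : Type*} [Field K] (F : IntermediateField K (AlgebraicClosure K))
    (x : (AlgebraicClosure K)ˣ) : x ∈ unitsIn F ↔ (x : AlgebraicClosure K) ∈ F := Iff.rfl

lemma le_adjoin_of_unitsIn {K : Type*} [Field K] (F : IntermediateField K (AlgebraicClosure K))
    (G : Subgroup (AlgebraicClosure K)ˣ) (h : unitsIn F ≤ G) :
    F ≤ IntermediateField.adjoin K (Units.val '' (G : Set (AlgebraicClosure K)ˣ)) := by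
  intro x hx
  by_cases h0 : x = 0
  · rw [h0]; exact zero_mem _
  · exact IntermediateField.subset_adjoin K _ ⟨Units.mk0 x h0, h hx, rfl⟩

lemma mem_adjoin_of_mem {K : Type*} [Field K] {G : Subgroup (AlgebraicClosure K)ˣ}
    {x : (AlgebraicClosure K)ˣ} (h : x ∈ G) :
    (x : AlgebraicClosure K) ∈
      IntermediateField.adjoin K (Units.val '' (G : Set (AlgebraicClosure K)ˣ)) :=
  IntermediateField.subset_adjoin K _ ⟨x, h, rfl⟩

lemma adjoin_le_iff' {K : Type*} [Field K] {G : Subgroup (AlgebraicClosure K)ˣ}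
    {F : IntermediateField K (AlgebraicClosure K)} :
    IntermediateField.adjoin K (Units.val '' (G : Set (AlgebraicClosure K)ˣ)) ≤ F ↔
      G ≤ unitsIn F := by
  rw [IntermediateField.adjoin_le_iff]
  constructor
  · intro h x hx
    exact h ⟨x, hx, rfl⟩
  · rintro h _ ⟨x, hx, rfl⟩
    exact h hx

lemma adjoin_sup_unitsIn {K : Type*} [Field K] (G : Subgroup (AlgebraicClosure K)ˣ)
    (F : IntermediateField K (AlgebraicClosure K))
    (h : F ≤ IntermediateField.adjoin K (Units.val '' (G : Set (AlgebraicClosure K)ˣ))) :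
    IntermediateField.adjoin K
      (Units.val '' ((G ⊔ unitsIn F : Subgroup (AlgebraicClosure K)ˣ) :
        Set (AlgebraicClosure K)ˣ)) =
    IntermediateField.adjoin K (Units.val '' (G : Set (AlgebraicClosure K)ˣ)) := by
  apply le_antisymm
  · rw [adjoin_le_iff']
    exact sup_le (adjoin_le_iff'.1 le_rfl) (fun x hx => h hx)
  · rw [adjoin_le_iff']
    exact le_sup_left.trans (adjoin_le_iff'.1 le_rfl)

lemma kneser_two {K : Type*} [Field K] (h2 : (2 : AlgebraicClosure K) ≠ 0)
    (i : AlgebraicClosure K) (hi2 : i ^ 2 = -1) (m : ℕ) :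
    ∀ (F : IntermediateField K (AlgebraicClosure K)) (_ : i ∈ F)
      (G : Subgroup (AlgebraicClosure K)ˣ) (_ : unitsIn F ≤ G)
      (_ : (unitsIn F).relIndex G = 2 ^ m),
      F.relfinrank (IntermediateField.adjoin K (Units.val '' (G : Set (AlgebraicClosure K)ˣ))) =
        2 ^ m := by
  induction m with
  | zero =>
    intro F hi G hFG hm
    rw [pow_zero, Subgroup.relIndex_eq_one] at hm
    rw [pow_zero, IntermediateField.relfinrank_eq_one_iff, adjoin_le_iff']
    exact hm
  | succ m ih =>
    intro F hi G hFG hm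
    have hpow : ∀ g ∈ G, g ^ 2 ^ (m + 1) ∈ unitsIn F := by
      intro g hg
      have := Subgroup.pow_index_mem ((unitsIn F).subgroupOf G) ⟨g, hg⟩
      rw [← Subgroup.relIndex, hm] at this
      exact this
    obtain ⟨g, hgG, hgF⟩ : ∃ g ∈ G, g ∉ unitsIn F := by
      by_contra! hcon
      have := Subgroup.relIndex_eq_one.2 (show G ≤ unitsIn F from hcon)
      rw [hm] at this
      exact absurd this (by simp)
    obtain ⟨a, haG, haF, ha2⟩ : ∃ a ∈ G, a ∉ unitsIn F ∧ a ^ 2 ∈ unitsIn F := by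
      classical
      have hex : ∃ k, g ^ 2 ^ k ∈ unitsIn F := ⟨_, hpow g hgG⟩
      have hk := Nat.find_spec hex
      have hmin := fun k => Nat.find_min hex (m := k)
      rcases hk' : Nat.find hex with _ | k
      · rw [hk'] at hk; simp at hk; exact absurd hk hgF
      · rw [hk'] at hk hmin
        refine ⟨g ^ 2 ^ k, pow_mem hgG _, hmin k (Nat.lt_succ_self k), ?_⟩
        rw [← pow_mul, ← pow_succ]; exact hk
    have ha2' : (a : AlgebraicClosure K) ^ 2 ∈ F := by
      have : ((a ^ 2 : (AlgebraicClosure K)ˣ) : AlgebraicClosure K) ∈ F := ha2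
      simpa using this
    obtain ⟨F1, hFF1, haF1, hdeg, hF1⟩ := quad_ext F a haF ha2'
    have hrad := quad_rad F h2 i hi hi2 a haF ha2' F1 hF1 (m + 1)
    have hF1u : unitsIn F ≤ unitsIn F1 := fun x hx => hFF1 hx
    have hidx2 : (unitsIn F).relIndex (unitsIn F1 ⊓ G) = 2 := by
      rw [Subgroup.relIndex_eq_two_iff]
      refine ⟨a, ⟨haF1, haG⟩, ?_⟩
      rintro b ⟨hb1, hbG⟩
      have hbp : (b : AlgebraicClosure K) ^ 2 ^ (m + 1) ∈ F := by
        have : ((b ^ 2 ^ (m + 1) : (AlgebraicClosure K)ˣ) : AlgebraicClosure K) ∈ F := hpow b hbG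
        simpa using this
      by_cases hbF : b ∈ unitsIn F
      · right
        refine ⟨hbF, fun h => haF ?_⟩
        simpa using mul_mem (inv_mem hbF) h
      · left
        refine ⟨?_, hbF⟩
        rcases hrad b hb1 (Or.inl hbp) with h | ⟨v, hv, h⟩
        · exact absurd h hbF
        · rw [mem_unitsIn, Units.val_mul, h, mul_assoc, ← pow_two]
          exact mul_mem hv ha2'
    have hidx' : (unitsIn F1).relIndex (G ⊔ unitsIn F1) = 2 ^ m := by
      rw [Subgroup.relIndex_sup_right, ← Subgroup.inf_relIndex_right]
      have := Subgroup.relIndex_mul_relIndex (unitsIn F) (unitsIn F1 ⊓ G) G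
        (le_inf hF1u hFG) inf_le_right
      rw [hidx2, hm, pow_succ'] at this
      exact Nat.eq_of_mul_eq_mul_left (by norm_num) this
    have hF1adj : F1 ≤ IntermediateField.adjoin K
        (Units.val '' (G : Set (AlgebraicClosure K)ˣ)) := by
      intro x hx
      have hFa := le_adjoin_of_unitsIn F G hFG
      obtain ⟨u, hu, v, hv, rfl⟩ := hF1 x hx
      exact add_mem (hFa hu) (mul_mem (hFa hv) (mem_adjoin_of_mem haG))
    have hih := ih F1 (hFF1 hi) (G ⊔ unitsIn F1) le_sup_right hidx'
    rw [adjoin_sup_unitsIn G F1 hF1adj] at hih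
    rw [← IntermediateField.relfinrank_mul_relfinrank hFF1 hF1adj, hdeg, hih, pow_succ']

/-- Kneser for a group `G` whose index over `baseUnits K` is a power of two. -/
lemma kneser_two' {K : Type*} [Field K] (h2 : (2 : AlgebraicClosure K) ≠ 0)
    (i : AlgebraicClosure K) (hi2 : i ^ 2 = -1) 
    (F : IntermediateField K (AlgebraicClosure K)) (hi : i ∈ F)
    (G : Subgroup (AlgebraicClosure K)ˣ) {m : ℕ} (hm : (unitsIn F).relIndex G ∣ 2 ^ m) :
    F.relfinrank (IntermediateField.adjoin K (Units.val '' ((G ⊔ unitsIn F :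
      Subgroup (AlgebraicClosure K)ˣ) : Set (AlgebraicClosure K)ˣ))) =
        (unitsIn F).relIndex G := by
  obtain ⟨k, -, hk⟩ := (Nat.dvd_prime_pow Nat.prime_two).1 hm
  rw [hk]
  exact kneser_two h2 i hi2 k F hi _ le_sup_right (by rw [Subgroup.relIndex_sup_right, hk])

/-- Theorem 4.6: let `char K ≠ 2` and consider the special case of Kneser's theorem, i.e.
`ζ₄ ∉ K` and `1 + ζ₄ ∈ Γ` or `1 - ζ₄ ∈ Γ`. Then
`[K(Γ_2):K] = 2 ⬝ |⟨Γ_2, K(ζ₄)^×⟩ : K(ζ₄)^×|` and, setting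
`Γ_{2,E} := ⟨Γ_2, K(ζ₄)^×⟩ ∩ K(W_2, ζ₄)^×`, we have `K(Γ_2) ∩ K(W_2, ζ₄) = K(Γ_{2,E})` and
`[K(Γ):K] = [K(Γ_2):K] ⬝ [K(W_2, ζ₄):K] / (2 ⬝ |Γ_{2,E} : K(ζ₄)^×|)`. -/
theorem stmt14 (K : Type*) [Field K] (hchar : ringChar K ≠ 2)
    (W : Subgroup (AlgebraicClosure K)ˣ)
    (hW : ∃ S : Set (AlgebraicClosure K)ˣ, S.Finite ∧
      (∀ x ∈ S, ∃ q : ℕ, q.Prime ∧ Odd q ∧ q ≠ ringChar K ∧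
        IsPrimitiveRoot (x : AlgebraicClosure K) q) ∧ W = Subgroup.closure S)
    (Γ2 : Subgroup (AlgebraicClosure K)ˣ) (hΓK : baseUnits K ≤ Γ2)
    (hidx : ∃ m : ℕ, Subgroup.relIndex (baseUnits K) Γ2 = 2 ^ m)
    (hs : (¬ ∃ z : K, IsPrimitiveRoot z 4) ∧
      ∃ u ∈ baseUnits K ⊔ W ⊔ Γ2, ∃ i : AlgebraicClosure K, IsPrimitiveRoot i 4 ∧
        ((u : AlgebraicClosure K) = 1 + i ∨ (u : AlgebraicClosure K) = 1 - i)) :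
    letI Kζ4 := IntermediateField.adjoin K (primRoots K 4)
    letI KW4 := IntermediateField.adjoin K
      (Units.val '' (W : Set (AlgebraicClosure K)ˣ) ∪ primRoots K 4)
    letI Γ2E := (Γ2 ⊔ unitsIn Kζ4) ⊓ unitsIn KW4
    Module.finrank K (IntermediateField.adjoin K
        (Units.val '' (Γ2 : Set (AlgebraicClosure K)ˣ))) =
      2 * Subgroup.relIndex (unitsIn Kζ4) (Γ2 ⊔ unitsIn Kζ4) ∧
    IntermediateField.adjoin K (Units.val '' (Γ2 : Set (AlgebraicClosure K)ˣ)) ⊓ KW4 =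
      IntermediateField.adjoin K (Units.val '' (Γ2E : Set (AlgebraicClosure K)ˣ)) ∧
    Module.finrank K (IntermediateField.adjoin K
        (Units.val '' ((baseUnits K ⊔ W ⊔ Γ2) : Set (AlgebraicClosure K)ˣ))) *
      (2 * Subgroup.relIndex (unitsIn Kζ4) Γ2E) =
    Module.finrank K (IntermediateField.adjoin K
        (Units.val '' (Γ2 : Set (AlgebraicClosure K)ˣ))) * Module.finrank K KW4 := by
  obtain ⟨hK4, u, hu, i, hi4, hui⟩ := hs
  obtain ⟨S, -, hS, rfl⟩ := hW
  obtain ⟨m, hm⟩ := hidx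
  set Kζ4 := IntermediateField.adjoin K (primRoots K 4) with hKζ4
  set KW4 := IntermediateField.adjoin K
    (Units.val '' (Subgroup.closure S : Set (AlgebraicClosure K)ˣ) ∪ primRoots K 4) with hKW4
  set Γ2E := (Γ2 ⊔ unitsIn Kζ4) ⊓ unitsIn KW4 with hΓ2E
  have h2 : (2 : AlgebraicClosure K) ≠ 0 := by
    have h := Ring.two_ne_zero hchar
    intro h'
    apply h
    apply (algebraMap K (AlgebraicClosure K)).injective
    rw [map_ofNat, map_zero]
    exact h'
  have sq_prim : ∀ x : AlgebraicClosure K, IsPrimitiveRoot x 4 → x ^ 2 = -1 := by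
    intro x hx
    have h1 := hx.pow_eq_one
    have h3 := hx.pow_ne_one_of_pos_of_lt (l := 2) (by norm_num) (by norm_num)
    have : (x ^ 2 - 1) * (x ^ 2 + 1) = 0 := by linear_combination h1
    rcases mul_eq_zero.1 this with h | h
    · exact absurd (sub_eq_zero.1 h) h3
    · exact eq_neg_of_add_eq_zero_left h
  have hi2 := sq_prim i hi4
  -- the element `u` lies in `Γ2`
  have hWodd : ∀ w ∈ Subgroup.closure S, ∃ N : ℕ, Odd N ∧ w ^ N = 1 := by
    intro w hw
    induction hw using Subgroup.closure_induction with
    | mem x hx =>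
      obtain ⟨q, -, hq, -, hx⟩ := hS x hx
      exact ⟨q, hq, Units.ext (by simpa using hx.pow_eq_one)⟩
    | one => exact ⟨1, odd_one, one_pow _⟩
    | mul x y _ _ hx hy =>
      obtain ⟨N, hN, hx⟩ := hx
      obtain ⟨M, hM, hy⟩ := hy
      refine ⟨N * M, hN.mul hM, ?_⟩
      rw [mul_pow, pow_mul, hx, mul_comm N M, pow_mul y, hy, one_pow, one_pow, one_mul]
    | inv x _ hx =>
      obtain ⟨N, hN, hx⟩ := hx
      exact ⟨N, hN, by rw [inv_pow, hx, inv_one]⟩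
  have hu4v : (u : AlgebraicClosure K) ^ 4 = -4 := by
    rcases hui with h | h
    · rw [h]; linear_combination (i ^ 2 + 4 * i + 5) * hi2
    · rw [h]; linear_combination (i ^ 2 - 4 * i + 5) * hi2
  have hu4 : u ^ 4 ∈ Γ2 := by
    apply hΓK
    have h4 : (-4 : K) ≠ 0 := by
      have h := Ring.two_ne_zero hchar
      have : (-4 : K) = - (2 * 2) := by norm_num
      rw [this]
      exact neg_ne_zero.2 (mul_ne_zero h h)
    refine ⟨Units.mk0 (-4) h4, Units.ext ?_⟩
    simp [hu4v]
    exact map_ofNat _ 4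
  have huΓ : u ∈ Γ2 := by
    have hu' : u ∈ Subgroup.closure S ⊔ Γ2 := by
      refine (sup_le (sup_le ?_ le_sup_left) le_sup_right : _ ≤ Subgroup.closure S ⊔ Γ2) hu
      exact hΓK.trans le_sup_right
    obtain ⟨w, hw, g, hg, rfl⟩ := Subgroup.mem_sup.1 hu'
    obtain ⟨N, hN, hwN⟩ := hWodd w hw
    obtain ⟨c, hc⟩ : ∃ c, N * N = 4 * c + 1 := by
      obtain ⟨k, rfl⟩ := hN
      exact ⟨k * k + k, by ring⟩
    have h1 : (w * g) ^ (N * N) ∈ Γ2 := by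
      rw [pow_mul, mul_pow, hwN, one_mul]
      exact pow_mem (pow_mem hg _) _
    rw [hc, pow_succ, pow_mul] at h1
    exact (Subgroup.mul_mem_cancel_left _ (pow_mem hu4 c)).1 h1
  -- the field `K(i)`
  have hprim : ∀ (F : IntermediateField K (AlgebraicClosure K)), i ∈ F → primRoots K 4 ⊆ F := by
    intro F hF x hx
    have hx2 := sq_prim x hx
    have : (x - i) * (x + i) = 0 := by linear_combination hx2 - hi2
    rcases mul_eq_zero.1 this with h | h
    · rw [sub_eq_zero.1 h]; exact hF
    · rw [eq_neg_of_add_eq_zero_left h]; exact neg_mem hF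
  have hiL : i ∈ Kζ4 := IntermediateField.subset_adjoin K _ hi4
  have hLle : ∀ (F : IntermediateField K (AlgebraicClosure K)), i ∈ F → Kζ4 ≤ F :=
    fun F hF => IntermediateField.adjoin_le_iff.2 (hprim F hF)
  have hiE : i ∈ KW4 := IntermediateField.subset_adjoin K _ (Or.inr hi4)
  have hLE : Kζ4 ≤ KW4 := hLle _ hiE
  have hL2 : Module.finrank K Kζ4 = 2 := by
    have hnot : i ∉ (⊥ : IntermediateField K (AlgebraicClosure K)) := by
      intro h
      obtain ⟨z, hz⟩ := IntermediateField.mem_bot.1 h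
      apply hK4
      refine ⟨z, ?_⟩
      rw [← hz] at hi4
      exact hi4.of_map_of_injective (f := algebraMap K (AlgebraicClosure K))
        (algebraMap K (AlgebraicClosure K)).injective
    obtain ⟨F1, -, hiF, hd, hF⟩ := quad_ext ⊥ i hnot (by rw [hi2]; exact neg_mem (one_mem _))
    have : Kζ4 = F1 := by
      apply le_antisymm (hLle _ hiF)
      intro x hx
      obtain ⟨a, ha, b, hb, rfl⟩ := hF x hx
      exact add_mem ((bot_le : ⊥ ≤ Kζ4) ha) (mul_mem ((bot_le : ⊥ ≤ Kζ4) hb) hiL)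
    rw [this, ← IntermediateField.relfinrank_bot_left, hd]
  have hiΓ : i ∈ IntermediateField.adjoin K (Units.val '' (Γ2 : Set (AlgebraicClosure K)ˣ)) := by
    have hm := mem_adjoin_of_mem huΓ
    rcases hui with h | h
    · have : i = u - 1 := by rw [h]; ring
      rw [this]; exact sub_mem hm (one_mem _)
    · have : i = 1 - u := by rw [h]; ring
      rw [this]; exact sub_mem (one_mem _) hm
  have hbase : ∀ F : IntermediateField K (AlgebraicClosure K), baseUnits K ≤ unitsIn F := by
    rintro F _ ⟨x, rfl⟩
    exact F.algebraMap_mem _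
  have hdvd : ∀ F : IntermediateField K (AlgebraicClosure K),
      (unitsIn F).relIndex Γ2 ∣ 2 ^ m := by
    intro F
    rw [← hm]
    exact Subgroup.relIndex_dvd_of_le_left _ (hbase F)
  have hT := adjoin_sup_unitsIn Γ2 Kζ4 (hLle _ hiΓ)
  set T := IntermediateField.adjoin K (Units.val '' (Γ2 : Set (AlgebraicClosure K)ˣ)) with hTdef
  have hLT : Kζ4 ≤ T := hLle _ hiΓ
  have kL := kneser_two' h2 i hi2 Kζ4 hiL Γ2 (hdvd _)
  rw [hT] at kL
  have part1 : Module.finrank K T = 2 * (unitsIn Kζ4).relIndex (Γ2 ⊔ unitsIn Kζ4) := by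
    rw [← IntermediateField.finrank_bot_mul_relfinrank hLT, hL2, kL, Subgroup.relIndex_sup_right]
  -- index computations
  have hLEu : unitsIn Kζ4 ≤ unitsIn KW4 := fun x hx => hLE hx
  have hLΓE : unitsIn Kζ4 ≤ Γ2E := le_inf le_sup_right hLEu
  have hmul : (unitsIn Kζ4).relIndex Γ2E * Γ2E.relIndex (Γ2 ⊔ unitsIn Kζ4) =
      (unitsIn Kζ4).relIndex (Γ2 ⊔ unitsIn Kζ4) :=
    Subgroup.relIndex_mul_relIndex _ _ _ hLΓE inf_le_left
  have hsupidx : ∀ F : IntermediateField K (AlgebraicClosure K), Kζ4 ≤ F →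
      (unitsIn F).relIndex (Γ2 ⊔ unitsIn Kζ4) = (unitsIn F).relIndex Γ2 := by
    intro F hF
    have hFu : unitsIn Kζ4 ≤ unitsIn F := fun x hx => hF hx
    rw [← Subgroup.relIndex_sup_right, sup_assoc, sup_eq_right.2 hFu,
      Subgroup.relIndex_sup_right]
  have hEidx : Γ2E.relIndex (Γ2 ⊔ unitsIn Kζ4) = (unitsIn KW4).relIndex Γ2 := by
    rw [← hsupidx KW4 hLE]
    exact Subgroup.inf_relIndex_left _ _
  have hGT : Γ2 ⊔ unitsIn Kζ4 ≤ unitsIn T :=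
    sup_le (adjoin_le_iff'.1 le_rfl) (fun x hx => hLT hx)
  refine ⟨part1, ?_, ?_⟩
  · set M := IntermediateField.adjoin K (Units.val '' (Γ2E : Set (AlgebraicClosure K)ˣ)) with hM
    have hMN : M ≤ T ⊓ KW4 := by
      rw [adjoin_le_iff']
      intro x hx
      exact ⟨hGT hx.1, hx.2⟩
    have hLM : Kζ4 ≤ M := le_adjoin_of_unitsIn _ _ hLΓE
    have key : ∀ F : IntermediateField K (AlgebraicClosure K), M ≤ F → F ≤ T ⊓ KW4 →
        F.relfinrank T = (unitsIn KW4).relIndex Γ2 := by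
      intro F hMF hFN
      have h := kneser_two' h2 i hi2 F (hMF (hLM hiL)) Γ2 (hdvd _)
      rw [adjoin_sup_unitsIn Γ2 F (hFN.trans inf_le_left)] at h
      rw [h, ← hEidx, ← hsupidx F (hLM.trans hMF), ← Subgroup.inf_relIndex_right]
      congr 1
      apply le_antisymm
      · intro x hx
        exact ⟨hx.2, (hFN hx.1).2⟩
      · intro x hx
        exact ⟨hMF (mem_adjoin_of_mem hx), hx.1⟩
    have h1 := key M le_rfl hMN
    have h3 := key (T ⊓ KW4) hMN le_rfl
    have h4 := IntermediateField.relfinrank_mul_relfinrank hMN (inf_le_left : T ⊓ KW4 ≤ T)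
    rw [h1, h3] at h4
    have hpos : 0 < (unitsIn KW4).relIndex Γ2 := Nat.pos_of_dvd_of_pos (hdvd _) (by positivity)
    have h5 : M.relfinrank (T ⊓ KW4) = 1 := by
      apply Nat.eq_of_mul_eq_mul_right hpos
      rw [h4, one_mul]
    exact le_antisymm (IntermediateField.relfinrank_eq_one_iff.1 h5) hMN
  · have kE := kneser_two' h2 i hi2 KW4 hiE Γ2 (hdvd _)
    have hfield : IntermediateField.adjoin K
        (Units.val '' ((baseUnits K ⊔ Subgroup.closure S ⊔ Γ2 : Set (AlgebraicClosure K)ˣ))) =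
        IntermediateField.adjoin K (Units.val '' ((Γ2 ⊔ unitsIn KW4 :
          Subgroup (AlgebraicClosure K)ˣ) : Set (AlgebraicClosure K)ˣ)) := by
      apply le_antisymm
      · apply IntermediateField.adjoin.mono
        apply Set.image_mono
        refine sup_le (sup_le ?_ ?_) ?_
        · exact fun x hx => (le_sup_left : Γ2 ≤ Γ2 ⊔ unitsIn KW4) (hΓK hx)
        · intro x hx
          exact (le_sup_right : unitsIn KW4 ≤ Γ2 ⊔ unitsIn KW4)
            (IntermediateField.subset_adjoin K _ (Or.inl ⟨x, hx, rfl⟩))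
        · exact fun x hx => (le_sup_left : Γ2 ≤ Γ2 ⊔ unitsIn KW4) hx
      · rw [adjoin_le_iff']
        refine sup_le ?_ ?_
        · intro x hx
          exact IntermediateField.subset_adjoin K _ ⟨x, Or.inr hx, rfl⟩
        · intro x hx
          rw [mem_unitsIn] at hx ⊢
          refine (?_ : KW4 ≤ _) hx
          apply IntermediateField.adjoin_le_iff.2
          apply Set.union_subset
          · rintro _ ⟨w, hw, rfl⟩
            exact IntermediateField.subset_adjoin K _ ⟨w, Or.inl (Or.inr hw), rfl⟩
          · apply hprim
            refine IntermediateField.adjoin.mono K _ _ (Set.image_mono ?_) hiΓ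
            exact fun x hx => Or.inr hx
    rw [hfield, ← IntermediateField.finrank_bot_mul_relfinrank
      (le_adjoin_of_unitsIn KW4 (Γ2 ⊔ unitsIn KW4) le_sup_right), kE, part1, ← hmul, hEidx]
    ring

end
end
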